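/- For integers d ≥ 1, n ≥ 0, m ≥ 0 and 0 ≤ k ≤ 2·min(n, m), there is an isomorphism of homotopy groups π_k(SP^d(ℂP^n)) ≅ π_k(SP^d(ℂP^m)). In particular, for fixed d and k, the homotopy groups π_k(SP^d(ℂP^n)) are independent of n once 2n ≥ k (stability of the homotopy groups of the space of degree-d zero-cycles as the ambient dimension increases). -/

import Mathlib

open scoped Topology

/-- Complex projective `n`-space `ℂP^n`: the quotient of `ℂ^{n+1} ∖ {0}` by the scalar
action of `ℂ*`, with the quotient topology. -/
def CP (n : ℕ) : Type := Projectivization ℂ (Fin (n + 1) → ℂ)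

instance (n : ℕ) : TopologicalSpace (CP n) :=
  inferInstanceAs (TopologicalSpace (Quotient (projectivizationSetoid ℂ (Fin (n + 1) → ℂ))))

/-- The setoid on `X^d` identifying tuples up to the permutation action of the symmetric
group on `d` letters. -/
def SPSetoid (X : Type) (d : ℕ) : Setoid (Fin d → X) where
  r f g := ∃ σ : Equiv.Perm (Fin d), f ∘ σ = g
  iseqv := by
    refine ⟨fun f => ⟨Equiv.refl _, rfl⟩, ?_, ?_⟩
    · rintro f g ⟨σ, rfl⟩
      exact ⟨σ.symm, by funext i; simp⟩
    · rintro f g h ⟨σ, rfl⟩ ⟨τ, rfl⟩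
      exact ⟨τ.trans σ, rfl⟩

/-- The `d`-th symmetric product `SP^d(X)`: the quotient of `X^d` by the permutation action
of the symmetric group on `d` letters, with the quotient topology. -/
def SP (X : Type) [TopologicalSpace X] (d : ℕ) : Type := Quotient (SPSetoid X d)

instance (X : Type) [TopologicalSpace X] (d : ℕ) : TopologicalSpace (SP X d) :=
  inferInstanceAs (TopologicalSpace (Quotient (SPSetoid X d)))

/-!
A map `f` from a compact set of dimension less than `2(n + 1)` to `SP^d(ℂP^(n+1))` can be pushed
into `SP^d(ℂP^n)`, keeping fixed the cycles that already lie there. Projecting from a point off the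
hyperplane `ℂP^n` retracts the points of `f y`, and is the end of a linear deformation, provided
that the centre of projection avoids them. The centres may vary with `y` and with the point of the
cycle; they are governed by a nowhere zero function close to a given function into `ℂ^(n+1)`, which
exists by general position because `ℂ^(n+1)` has real dimension `2(n + 1)`. Applied to cubes and to
homotopies of cubes this shows that the inclusion induces bijections on `π_k` for `k ≤ 2n`.
-/

section InducedMap

open scoped unitInterval Topology.Homotopy

variable {N X Y Z : Type*} [TopologicalSpace X] [TopologicalSpace Y] [TopologicalSpace Z]

/-- The class of a generalized loop in the homotopy group. -/
def loopClass {a : X} (F : Ω^ N X a) : HomotopyGroup N X a := Quotient.mk _ F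

lemma loopClass_surjective {a : X} :
    Function.Surjective (loopClass : Ω^ N X a → HomotopyGroup N X a) :=
  Quotient.mk_surjective

lemma loopClass_eq_iff {a : X} {F G : Ω^ N X a} :
    loopClass F = loopClass G ↔ F.1.HomotopicRel G.1 (Cube.boundary N) :=
  Quotient.eq

lemma loopClass_mul [DecidableEq N] [Nonempty N] {a : X} (i : N) (F G : Ω^ N X a) :
    loopClass F * loopClass G = loopClass (GenLoop.transAt i G F) :=
  HomotopyGroup.mul_spec

/-- Composition of a generalized loop with a continuous map. -/
def genLoopMap (f : C(X, Y)) {a : X} (F : Ω^ N X a) : Ω^ N Y (f a) :=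
  ⟨f.comp F.1, fun y hy => congrArg f (F.2 y hy)⟩

lemma genLoopMap_transAt [DecidableEq N] (f : C(X, Y)) {a : X} (i : N) (F G : Ω^ N X a) :
    genLoopMap f (GenLoop.transAt i F G) =
      GenLoop.transAt i (genLoopMap f F) (genLoopMap f G) :=
  GenLoop.ext _ _ fun y => by
    change f (GenLoop.transAt i F G y) = _
    simp only [GenLoop.transAt, GenLoop.coe_copy]
    exact apply_ite f _ _ _

/-- The map of homotopy groups (of homotopy sets, for an arbitrary index type `N`) induced by a
continuous map. -/
def homotopyGroupMap (f : C(X, Y)) (a : X) : HomotopyGroup N X a → HomotopyGroup N Y (f a) :=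
  Quotient.map (genLoopMap f) fun _ _ h => h.comp_continuousMap f

@[simp] lemma homotopyGroupMap_loopClass (f : C(X, Y)) {a : X} (F : Ω^ N X a) :
    homotopyGroupMap f a (loopClass F) = loopClass (genLoopMap f F) :=
  rfl

lemma homotopyGroupMap_id (a : X) :
    homotopyGroupMap (N := N) (ContinuousMap.id X) a = id := by
  funext x
  obtain ⟨F, rfl⟩ := loopClass_surjective x
  rfl

lemma homotopyGroupMap_comp (g : C(Y, Z)) (f : C(X, Y)) (a : X) :
    homotopyGroupMap (N := N) (g.comp f) a =
      homotopyGroupMap g (f a) ∘ homotopyGroupMap f a := by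
  funext x
  obtain ⟨F, rfl⟩ := loopClass_surjective x
  rfl

lemma homotopyGroupMap_mul [DecidableEq N] [Nonempty N] (f : C(X, Y)) (a : X)
    (x y : HomotopyGroup N X a) :
    homotopyGroupMap f a (x * y) = homotopyGroupMap f a x * homotopyGroupMap f a y := by
  obtain ⟨F, rfl⟩ := loopClass_surjective x
  obtain ⟨G, rfl⟩ := loopClass_surjective y
  let i : N := Classical.arbitrary N
  simp only [loopClass_mul i, homotopyGroupMap_loopClass, genLoopMap_transAt]

/-- The group isomorphism given by a map that is bijective on homotopy groups. -/
noncomputable def homotopyGroupMulEquiv [DecidableEq N] [Nonempty N] (f : C(X, Y)) (a : X)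
    (hf : Function.Bijective (homotopyGroupMap (N := N) f a)) :
    HomotopyGroup N X a ≃* HomotopyGroup N Y (f a) where
  toEquiv := Equiv.ofBijective _ hf
  map_mul' := homotopyGroupMap_mul f a

lemma homotopyGroupMap_homeomorph_bijective (e : X ≃ₜ Y) (a : X) :
    Function.Bijective (homotopyGroupMap (N := N) (e : C(X, Y)) a) := by
  constructor
  · intro x y h
    obtain ⟨F, rfl⟩ := loopClass_surjective x
    obtain ⟨G, rfl⟩ := loopClass_surjective y
    have cancel (F : C(N → I, X)) : (e.symm : C(Y, X)).comp ((e : C(X, Y)).comp F) = F :=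
      ContinuousMap.ext fun y => e.symm_apply_apply (F y)
    have h' := (loopClass_eq_iff.1 h).comp_continuousMap (e.symm : C(Y, X))
    simp only [genLoopMap, cancel] at h'
    exact loopClass_eq_iff.2 h'
  · intro x
    obtain ⟨F, rfl⟩ := loopClass_surjective x
    refine ⟨loopClass ⟨(e.symm : C(Y, X)).comp F.1, fun y hy => ?_⟩,
      congrArg loopClass (GenLoop.ext _ _ fun y => e.apply_symm_apply (F y))⟩
    exact (congrArg e.symm (F.2 y hy)).trans (e.symm_apply_apply a)

end InducedMap

section ChangeOfBasepoint

open scoped unitInterval Topology.Homotopy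

variable {N X : Type*}

/-- The dilation of the cube by the factor `r` about its centre, followed by the projection back
onto the cube. -/
noncomputable def cubeDilation (r : ℝ) (x : N → I) : N → I :=
  fun i => Set.projIcc 0 1 zero_le_one (1 / 2 + r * ((x i : ℝ) - 1 / 2))

lemma cubeDilation_one (x : N → I) : cubeDilation 1 x = x := by
  funext i
  simp only [cubeDilation, one_mul, add_sub_cancel, Set.projIcc_val]

/-- Evaluation of free paths at time `t`. -/
def pathEval [TopologicalSpace X] (t : I) : C(C(I, X), X) := ⟨fun γ => γ t, continuous_eval_const t⟩

section Collar

variable [Fintype N]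

/-- The distance from the centre of the cube in the sup norm, normalised to be `1` exactly on the
boundary. -/
noncomputable def cubeRadius (x : N → I) : ℝ := ‖fun i => 2 * (x i : ℝ) - 1‖

lemma continuous_cubeRadius : Continuous (cubeRadius : (N → I) → ℝ) := by
  unfold cubeRadius
  fun_prop

lemma cubeRadius_le_one (x : N → I) : cubeRadius x ≤ 1 := by
  refine (pi_norm_le_iff_of_nonneg zero_le_one).2 fun i => ?_
  rw [Real.norm_eq_abs, abs_le]
  constructor <;> linarith [(x i).2.1, (x i).2.2]

lemma cubeRadius_of_mem_boundary {x : N → I} (hx : x ∈ Cube.boundary N) : cubeRadius x = 1 := by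
  refine le_antisymm (cubeRadius_le_one x) ?_
  obtain ⟨i, hi⟩ := hx
  refine le_trans ?_ (norm_le_pi_norm _ i)
  rcases hi with hi | hi <;> norm_num [hi]

lemma cubeDilation_mem_boundary {r : ℝ} {x : N → I} (h : r * cubeRadius x = 1) :
    cubeDilation r x ∈ Cube.boundary N := by
  obtain ⟨i, hi⟩ : ∃ i, 1 ≤ |r * (2 * (x i : ℝ) - 1)| := by
    by_contra! hlt
    have : ‖r • fun i => 2 * (x i : ℝ) - 1‖ < 1 := (pi_norm_lt_iff zero_lt_one).2 hlt
    rw [norm_smul] at this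
    exact (this.trans_eq h.symm).not_ge
      (mul_le_mul_of_nonneg_right (le_abs_self r) (norm_nonneg _))
  refine ⟨i, ?_⟩
  rcases le_abs.1 hi with hi | hi
  · exact Or.inr (Set.projIcc_of_right_le _ (by linarith))
  · exact Or.inl (Set.projIcc_of_le_left _ (by linarith))

/-- A map of the cube shrunk concentrically to radius `1 / (1 + τ)`, surrounded by a collar on which
it runs along `γ` from time `0` to time `τ`. -/
noncomputable def collar (f : (N → I) → X) (γ : ℝ → X) (τ : ℝ) (x : N → I) : X :=
  if (1 + τ) * cubeRadius x ≤ 1 then f (cubeDilation (1 + τ) x)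
  else γ ((1 + τ) * cubeRadius x - 1)

lemma collar_zero (f : (N → I) → X) (γ : ℝ → X) (x : N → I) : collar f γ 0 x = f x := by
  simp [collar, cubeRadius_le_one, cubeDilation_one]

lemma collar_of_mem_boundary {f : (N → I) → X} {γ : ℝ → X} {τ : ℝ} (hτ : 0 ≤ τ)
    (hf : ∀ y ∈ Cube.boundary N, f y = γ 0) {x : N → I} (hx : x ∈ Cube.boundary N) :
    collar f γ τ x = γ τ := by
  rcases hτ.eq_or_lt with rfl | hτ
  · rw [collar_zero, hf x hx]
  · simp [collar, cubeRadius_of_mem_boundary hx, hτ]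

variable [TopologicalSpace X]

lemma continuous_collar {S : Type*} [TopologicalSpace S] {f : S → (N → I) → X} {γ : S → ℝ → X}
    {τ : S → ℝ} {x : S → N → I} (hf : Continuous (Function.uncurry f))
    (hγ : Continuous (Function.uncurry γ)) (hτ : Continuous τ) (hx : Continuous x)
    (hfγ : ∀ s, ∀ y ∈ Cube.boundary N, f s y = γ s 0) :
    Continuous fun s => collar (f s) (γ s) (τ s) (x s) := by
  have hr : Continuous fun s => (1 + τ s) * cubeRadius (x s) :=
    (continuous_const.add hτ).mul (continuous_cubeRadius.comp hx)
  refine Continuous.if_le (hf.comp (continuous_id.prodMk (continuous_pi fun i => ?_)))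
    (hγ.comp (continuous_id.prodMk (hr.sub continuous_const))) hr continuous_const ?_
  · exact (continuous_projIcc (h := zero_le_one)).comp
      (continuous_const.add ((continuous_const.add hτ).mul (by fun_prop)))
  · intro s hs
    rw [hfγ s _ (cubeDilation_mem_boundary hs), hs, sub_self]

/-- The lift to the path space, along evaluation at time `0`, of a loop at `γ 0`. -/
noncomputable def collarLoop (γ : C(I, X)) (F : Ω^ N X (γ 0)) : Ω^ N C(I, X) γ where
  val := ContinuousMap.curry
    { toFun := fun p => collar F (Set.IccExtend zero_le_one γ) p.2 p.1
      continuous_toFun :=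
        continuous_collar (F.1.continuous.comp continuous_snd)
          (γ.continuous.Icc_extend'.comp continuous_snd) (by fun_prop) (by fun_prop)
          fun _ y hy => by simpa using F.2 y hy }
  property y hy := by
    ext t
    refine (collar_of_mem_boundary t.2.1 (fun z hz => ?_) hy).trans (by simp)
    simpa using F.2 z hz

lemma genLoopMap_pathEval_collarLoop (γ : C(I, X)) (F : Ω^ N X (γ 0)) :
    genLoopMap (pathEval 0) (collarLoop γ F) = F :=
  GenLoop.ext _ _ fun y => collar_zero F _ y

lemma loopClass_collarLoop_congr (γ : C(I, X)) {F G : Ω^ N X (γ 0)}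
    (h : loopClass F = loopClass G) :
    loopClass (collarLoop γ F) = loopClass (collarLoop γ G) := by
  obtain ⟨K⟩ := loopClass_eq_iff.1 h
  have hK (s : I) (y) (hy : y ∈ Cube.boundary N) :
      K (s, y) = Set.IccExtend zero_le_one γ 0 := by
    simpa using (K.eq_fst s hy).trans (F.2 y hy)
  let Φ : C((I × (N → I)) × I, X) :=
    { toFun := fun p => collar (fun y => K (p.1.1, y)) (Set.IccExtend zero_le_one γ) p.2 p.1.2
      continuous_toFun :=
        continuous_collar (K.continuous.comp (by fun_prop))
          (γ.continuous.Icc_extend'.comp continuous_snd) (by fun_prop) (by fun_prop)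
          fun p => hK p.1.1 }
  refine loopClass_eq_iff.2 ⟨⟨⟨Φ.curry, fun y => ?_, fun y => ?_⟩, fun s y hy => ?_⟩⟩
  · ext t
    simp [Φ, collarLoop]
  · ext t
    simp [Φ, collarLoop]
  · refine Eq.trans ?_ ((collarLoop γ F).2 y hy).symm
    ext t
    exact (collar_of_mem_boundary t.2.1 (hK s) hy).trans (by simp)

/-- At time `s` the homotopy follows `H` on `[0, s]` and the collar along `γ` afterwards. -/
lemma loopClass_collarLoop_genLoopMap (γ : C(I, X)) (H : Ω^ N C(I, X) γ) :
    loopClass (collarLoop γ (genLoopMap (pathEval 0) H)) = loopClass H := by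
  have hH (u : I) (y) (hy : y ∈ Cube.boundary N) :
      H y u = Set.IccExtend zero_le_one γ (u + 0) := by
    simpa using congrArg (fun β : C(I, X) => β u) (H.2 y hy)
  let Φ : C((I × (N → I)) × I, X) :=
    { toFun := fun p => collar (fun y => H y (min p.1.1 p.2))
        (fun u => Set.IccExtend zero_le_one γ ((min p.1.1 p.2 : I) + u))
        (p.2 - (min p.1.1 p.2 : I)) p.1.2
      continuous_toFun :=
        continuous_collar
          ((H.1.continuous.comp (by fun_prop)).eval (by fun_prop))
          (γ.continuous.Icc_extend'.comp (by fun_prop)) (by fun_prop) (by fun_prop)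
          fun p => hH _ }
  refine loopClass_eq_iff.2 ⟨⟨⟨Φ.curry, fun y => ?_, fun y => ?_⟩, fun s y hy => ?_⟩⟩
  · ext t
    change collar (fun y => H y (min 0 t))
      (fun u => Set.IccExtend zero_le_one γ ((min 0 t : I) + u)) (t - (min 0 t : I)) y =
        collar (fun y => H y 0) (Set.IccExtend zero_le_one γ) t y
    simp
  · ext t
    change collar (fun y => H y (min 1 t))
      (fun u => Set.IccExtend zero_le_one γ ((min 1 t : I) + u)) (t - (min 1 t : I)) y = H y t
    rw [min_eq_right (unitInterval.le_one' : t ≤ 1), sub_self, collar_zero]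
  · refine Eq.trans ?_ ((collarLoop γ _).2 y hy).symm
    ext t
    exact (collar_of_mem_boundary (f := fun y => H y (min s t))
      (γ := fun u => Set.IccExtend zero_le_one γ ((min s t : I) + u))
      (sub_nonneg.2 (min_le_right s t)) (hH (min s t)) hy).trans (by simp)

end Collar

variable [TopologicalSpace X] [Finite N]

lemma homotopyGroupMap_pathEval_zero_bijective (γ : C(I, X)) :
    Function.Bijective (homotopyGroupMap (N := N) (pathEval 0) γ) := by
  cases nonempty_fintype N
  constructor
  · intro x y h
    obtain ⟨H, rfl⟩ := loopClass_surjective x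
    obtain ⟨H', rfl⟩ := loopClass_surjective y
    rw [← loopClass_collarLoop_genLoopMap γ H, ← loopClass_collarLoop_genLoopMap γ H']
    exact loopClass_collarLoop_congr γ h
  · intro x
    obtain ⟨F, rfl⟩ := loopClass_surjective x
    exact ⟨loopClass (collarLoop γ F), congrArg loopClass (genLoopMap_pathEval_collarLoop γ F)⟩

/-- Reversal of free paths. -/
def pathReverse : C(I, X) ≃ₜ C(I, X) :=
  Homeomorph.arrowCongr unitInterval.symmHomeomorph (Homeomorph.refl X)

lemma homotopyGroupMap_pathEval_one_bijective (γ : C(I, X)) :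
    Function.Bijective (homotopyGroupMap (N := N) (pathEval 1) γ) := by
  have h : (pathEval 1 : C(C(I, X), X)) =
      (pathEval 0).comp (pathReverse : C(I, X) ≃ₜ C(I, X)) := by
    ext β
    exact congrArg β unitInterval.symm_zero.symm
  rw [h, homotopyGroupMap_comp]
  exact (homotopyGroupMap_pathEval_zero_bijective _).comp
    (homotopyGroupMap_homeomorph_bijective pathReverse γ)

lemma nonempty_homotopyGroup_equiv_of_joined {a b : X} (h : Joined a b) :
    Nonempty (HomotopyGroup N X a ≃ HomotopyGroup N X b) := by
  obtain ⟨γ, rfl, rfl⟩ := h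
  let e₀ : HomotopyGroup N C(I, X) γ ≃ HomotopyGroup N X (γ 0) :=
    Equiv.ofBijective _ (homotopyGroupMap_pathEval_zero_bijective γ)
  let e₁ : HomotopyGroup N C(I, X) γ ≃ HomotopyGroup N X (γ 1) :=
    Equiv.ofBijective _ (homotopyGroupMap_pathEval_one_bijective γ)
  exact ⟨e₀.symm.trans e₁⟩

lemma nonempty_homotopyGroup_mulEquiv_of_joined [DecidableEq N] [Nonempty N] {a b : X}
    (h : Joined a b) : Nonempty (HomotopyGroup N X a ≃* HomotopyGroup N X b) := by
  obtain ⟨γ, rfl, rfl⟩ := h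
  let e₀ : HomotopyGroup N C(I, X) γ ≃* HomotopyGroup N X (γ 0) :=
    homotopyGroupMulEquiv _ _ (homotopyGroupMap_pathEval_zero_bijective γ)
  let e₁ : HomotopyGroup N C(I, X) γ ≃* HomotopyGroup N X (γ 1) :=
    homotopyGroupMulEquiv _ _ (homotopyGroupMap_pathEval_one_bijective γ)
  exact ⟨e₀.symm.trans e₁⟩

end ChangeOfBasepoint

section Compression

open scoped unitInterval Topology.Homotopy

variable {A X : Type*} [TopologicalSpace A] [TopologicalSpace X]

/-- Every map `Y → X` can be deformed into `A` along `j`, relative to the points that it already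
maps into `A`. -/
def CompressesMaps (j : C(A, X)) (Y : Type*) [TopologicalSpace Y] : Prop :=
  ∀ f : C(Y, X), ∃ g : C(Y, A), (∀ y c, f y = j c → g y = c) ∧
    f.HomotopicRel (j.comp g) (f ⁻¹' Set.range j)

variable {N : Type*} {j : C(A, X)}

lemma CompressesMaps.homotopyGroupMap_surjective (hj : CompressesMaps j (N → I)) (a : A) :
    Function.Surjective (homotopyGroupMap (N := N) j a) := by
  intro x
  obtain ⟨F, rfl⟩ := loopClass_surjective x
  obtain ⟨g, hg, ⟨H⟩⟩ := hj F.1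
  refine ⟨loopClass ⟨g, fun y hy => hg y a (F.2 y hy)⟩, Eq.symm ?_⟩
  rw [homotopyGroupMap_loopClass, loopClass_eq_iff]
  exact ⟨{ H with prop' := fun t y hy => H.prop' t y ⟨a, (F.2 y hy).symm⟩ }⟩

lemma CompressesMaps.homotopyGroupMap_injective (hj : CompressesMaps j (I × (N → I))) (a : A) :
    Function.Injective (homotopyGroupMap (N := N) j a) := by
  intro x y h
  obtain ⟨F, rfl⟩ := loopClass_surjective x
  obtain ⟨G, rfl⟩ := loopClass_surjective y
  obtain ⟨H⟩ := loopClass_eq_iff.1 h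
  obtain ⟨g, hg, -⟩ := hj H.toContinuousMap
  exact loopClass_eq_iff.2 ⟨⟨⟨g, fun y => hg (0, y) (F y) (H.apply_zero y),
    fun y => hg (1, y) (G y) (H.apply_one y)⟩, fun t y hy => hg (t, y) (F y) (H.eq_fst t hy)⟩⟩

end Compression

namespace SP

variable {X X' X'' : Type} [TopologicalSpace X] [TopologicalSpace X'] [TopologicalSpace X'']
  {d : ℕ}

/-- The quotient map `X^d → SP^d(X)`. -/
def mk (x : Fin d → X) : SP X d := Quotient.mk (SPSetoid X d) x

lemma mk_eq_mk_iff {x y : Fin d → X} : mk x = mk y ↔ ∃ σ : Equiv.Perm (Fin d), x ∘ σ = y :=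
  Quotient.eq (r := SPSetoid X d)

lemma mk_surjective : Function.Surjective (mk : (Fin d → X) → SP X d) := Quotient.mk_surjective

lemma continuous_mk : Continuous (mk : (Fin d → X) → SP X d) := continuous_quotient_mk'

lemma isOpenMap_mk : IsOpenMap (mk : (Fin d → X) → SP X d) := by
  intro U hU
  have h : mk ⁻¹' (mk '' U) = ⋃ σ : Equiv.Perm (Fin d), (fun x : Fin d → X => x ∘ σ) ⁻¹' U := by
    ext x
    simp only [Set.mem_preimage, Set.mem_image, Set.mem_iUnion]
    constructor
    · rintro ⟨u, hu, h⟩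
      obtain ⟨σ, rfl⟩ := mk_eq_mk_iff.1 h.symm
      exact ⟨σ, hu⟩
    · rintro ⟨σ, hσ⟩
      exact ⟨_, hσ, (mk_eq_mk_iff.2 ⟨σ, rfl⟩).symm⟩
  refine isOpen_coinduced.2 (h ▸ ?_)
  exact isOpen_iUnion fun σ => hU.preimage (by fun_prop)

lemma isOpenQuotientMap_mk : IsOpenQuotientMap (mk : (Fin d → X) → SP X d) :=
  ⟨mk_surjective, continuous_mk, isOpenMap_mk⟩

instance [PathConnectedSpace X] : PathConnectedSpace (SP X d) :=
  inferInstanceAs (PathConnectedSpace (Quotient (SPSetoid X d)))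

/-- The set of points occurring in a zero-cycle. -/
def support (c : SP X d) : Set X :=
  Quotient.lift Set.range (by rintro x _ ⟨σ, rfl⟩; exact (σ.surjective.range_comp x).symm) c

@[simp] lemma support_mk (x : Fin d → X) : support (mk x) = Set.range x := rfl

lemma finite_support (c : SP X d) : (support c).Finite := by
  obtain ⟨x, rfl⟩ := mk_surjective c
  exact Set.finite_range x

lemma upperHemicontinuous_support : UpperHemicontinuous (support : SP X d → Set X) := by
  refine upperHemicontinuous_iff_isOpen_preimage_Iic.2 fun O hO => isOpen_coinduced.2 ?_
  have h : mk ⁻¹' (support ⁻¹' Set.Iic O) = Set.univ.pi fun _ : Fin d => O := by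
    ext x
    simp [Set.range_subset_iff]
  exact h ▸ isOpen_set_pi Set.finite_univ fun _ _ => hO

/-- The effect on zero-cycles of a map of spaces, which need not be continuous. -/
def map (φ : X → X') : SP X d → SP X' d :=
  Quotient.map (fun x => φ ∘ x) (by rintro x _ ⟨σ, rfl⟩; exact ⟨σ, rfl⟩)

@[simp] lemma map_id (c : SP X d) : map id c = c := by
  obtain ⟨x, rfl⟩ := mk_surjective c
  rfl

lemma map_map (ψ : X' → X'') (φ : X → X') (c : SP X d) : map ψ (map φ c) = map (ψ ∘ φ) c := by
  obtain ⟨x, rfl⟩ := mk_surjective c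
  rfl

lemma map_congr {φ ψ : X → X'} {c : SP X d} (h : ∀ q ∈ support c, φ q = ψ q) :
    map φ c = map ψ c := by
  obtain ⟨x, rfl⟩ := mk_surjective c
  exact congrArg mk (funext fun i => h _ ⟨i, rfl⟩)

/-- The map on zero-cycles depends continuously on parameters wherever the underlying map is
continuous near the support. -/
lemma continuousAt_map {Y : Type*} [TopologicalSpace Y] {φ : Y → X → X'} {f : Y → SP X d} {y : Y}
    (hφ : ∀ q ∈ support (f y), ContinuousAt (Function.uncurry φ) (y, q))
    (hf : ContinuousAt f y) : ContinuousAt (fun y => map (φ y) (f y)) y := by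
  obtain ⟨x, hx⟩ := mk_surjective (f y)
  have hquot : IsOpenQuotientMap (Prod.map id mk : Y × (Fin d → X) → Y × SP X d) :=
    IsOpenQuotientMap.id.prodMap isOpenQuotientMap_mk
  have htuple : ContinuousAt (fun p : Y × (Fin d → X) => φ p.1 ∘ p.2) (y, x) := by
    refine continuousAt_pi.2 fun i => ?_
    have hi : ContinuousAt (Function.uncurry φ) (y, x i) := hφ _ (hx ▸ ⟨i, rfl⟩)
    exact hi.comp (x := (y, x)) (f := fun p => (p.1, p.2 i)) (by fun_prop)
  have hmap : ContinuousAt (fun p : Y × SP X d => map (φ p.1) p.2) (y, f y) := by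
    rw [← hx]
    exact (hquot.continuousAt_comp_iff (x := (y, x))).1
      (continuous_mk.continuousAt.comp htuple)
  exact hmap.comp (f := fun y => (y, f y)) (continuousAt_id.prodMk hf)

end SP

section GeneralPosition

open Module

lemma exists_locallyConstant_approx {X V : Type*} [TopologicalSpace X] [T2Space X]
    [PseudoMetricSpace V] [Nonempty V] {S : Set X} (hS : S.Finite) {T : X → V} (hT : Continuous T)
    {ε : ℝ} (hε : 0 < ε) :
    ∃ (O : Set X) (φ : X → V), IsOpen O ∧ S ⊆ O ∧ (Set.range φ).Finite ∧
      ∀ q ∈ O, (∀ᶠ q' in 𝓝 q, φ q' = φ q) ∧ dist (φ q) (T q) < ε := by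
  classical
  obtain ⟨U, hU, hdisj⟩ := hS.t2_separation
  let W (c : X) : Set X := U c ∩ {q | dist (T c) (T q) < ε}
  have hW (c : X) : IsOpen (W c) := (hU c).2.inter (isOpen_lt (by fun_prop) continuous_const)
  let φ (q : X) : V := if h : ∃ c ∈ S, q ∈ W c then T h.choose else Classical.arbitrary V
  have hφ {c q : X} (hc : c ∈ S) (hq : q ∈ W c) : φ q = T c := by
    have h : ∃ c ∈ S, q ∈ W c := ⟨c, hc, hq⟩
    have hchoose : h.choose = c := hdisj.elim_set h.choose_spec.1 hc q h.choose_spec.2.1 hq.1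
    simp only [φ, dif_pos h, hchoose]
  refine ⟨⋃ c ∈ S, W c, φ, isOpen_biUnion fun c _ => hW c, fun c hc => ?_, ?_, fun q hq => ?_⟩
  · exact Set.mem_biUnion hc ⟨(hU c).1, by simpa using hε⟩
  · refine ((hS.image T).insert (Classical.arbitrary V)).subset ?_
    rintro _ ⟨q, rfl⟩
    by_cases h : ∃ c ∈ S, q ∈ W c
    · exact Or.inr ⟨_, h.choose_spec.1, (hφ h.choose_spec.1 h.choose_spec.2).symm⟩
    · exact Or.inl (dif_neg h)
  · obtain ⟨c, hc, hqc⟩ := Set.mem_iUnion₂.1 hq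
    rw [hφ hc hqc]
    exact ⟨Filter.mem_of_superset ((hW c).mem_nhds hqc) fun q' hq' => hφ hc hq', hqc.2⟩

variable {E V : Type*} [NormedAddCommGroup E] [NormedSpace ℝ E] [FiniteDimensional ℝ E]
  [NormedAddCommGroup V] [NormedSpace ℝ V] [FiniteDimensional ℝ V]

lemma exists_norm_lt_forall_ne_of_finrank_lt (hdim : finrank ℝ E < finrank ℝ V) {κ : Type*}
    [Countable κ] {W : κ → E → V} (hW : ∀ i, ContDiff ℝ 1 (W i)) {ε : ℝ} (hε : 0 < ε) :
    ∃ e : V, ‖e‖ < ε ∧ ∀ i x, W i x ≠ e := by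
  have hdimH : dimH (⋃ i, Set.range (W i)) < finrank ℝ V := by
    rw [dimH_iUnion]
    exact (iSup_le fun i => (hW i).dimH_range_le).trans_lt (by exact_mod_cast hdim)
  obtain ⟨e, he, he'⟩ := (dense_compl_of_dimH_lt_finrank hdimH).exists_dist_lt 0 hε
  exact ⟨e, by simpa using he', fun i x h => he (Set.mem_iUnion.2 ⟨i, x, h⟩)⟩

variable {Y X : Type*} [TopologicalSpace Y] [TopologicalSpace X]

lemma exists_smoothPartitionOfUnity_of_isInducing [CompactSpace Y] {ι : Y → E}
    (hι : Topology.IsInducing ι) {U : Y → Set Y} (hU : ∀ y, IsOpen (U y)) (hyU : ∀ y, y ∈ U y) :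
    ∃ (t : Finset Y) (ρ : SmoothPartitionOfUnity t (modelWithCornersSelf ℝ E) E (Set.range ι)),
      ∀ a y, ι y ∈ tsupport (ρ a) → y ∈ U a := by
  choose O hO hOU using fun y => hι.isOpen_iff.1 (hU y)
  obtain ⟨t, ht⟩ := CompactSpace.elim_nhds_subcover U fun y => (hU y).mem_nhds (hyU y)
  have hclosed : IsClosed (Set.range ι) := (isCompact_range hι.continuous).isClosed
  obtain ⟨ρ, hρ⟩ := SmoothPartitionOfUnity.exists_isSubordinate (modelWithCornersSelf ℝ E)
    hclosed (fun a : t => O a) (fun a => hO a) (by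
      rintro _ ⟨y, rfl⟩
      obtain ⟨a, ha, hya⟩ := Set.mem_iUnion₂.1 (ht.ge (Set.mem_univ y))
      exact Set.mem_iUnion.2 ⟨⟨a, ha⟩, (hOU a).ge hya⟩)
  exact ⟨t, ρ, fun a y hy => (hOU a).le (hρ a hy)⟩

lemma continuousAt_sum_smul {κ F : Type*} [Fintype κ] [AddCommMonoid F] [Module ℝ F]
    [TopologicalSpace F] [ContinuousAdd F] [ContinuousSMul ℝ F] {ρ : κ → Y → ℝ} {φ : κ → X → F}
    {y : Y} {q : X} (hρ : ∀ a, Continuous (ρ a))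
    (hφ : ∀ a, y ∈ tsupport (ρ a) → ContinuousAt (φ a) q) :
    ContinuousAt (fun p : Y × X => ∑ a, ρ a p.1 • φ a p.2) (y, q) := by
  refine tendsto_finsetSum _ fun a _ => ?_
  by_cases hy : y ∈ tsupport (ρ a)
  · exact ((hρ a).comp continuous_fst).continuousAt.smul
      ((hφ a hy).comp (x := (y, q)) continuousAt_snd)
  · have hzero : (fun p : Y × X => ρ a p.1 • φ a p.2) =ᶠ[𝓝 (y, q)] fun _ => 0 := by
      filter_upwards [continuousAt_fst.eventually (notMem_tsupport_iff_eventuallyEq.1 hy)] with p hp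
      simp [hp]
    exact continuousAt_const.congr hzero.symm

/-- A perturbation of a partition-of-unity average of locally constant approximations of `T` near
each `S y`: the average takes its values in the images of finitely many smooth maps `E → V`. -/
theorem exists_ne_zero_approx_of_finrank_lt [T2Space X] [CompactSpace Y] {ι : Y → E}
    (hι : Topology.IsInducing ι) (hdim : finrank ℝ E < finrank ℝ V) {S : Y → Set X}
    (hS : UpperHemicontinuous S) (hfin : ∀ y, (S y).Finite) {T : X → V} (hT : Continuous T)
    {ε : ℝ} (hε : 0 < ε) :
    ∃ w : Y → X → V, (∀ y q, w y q ≠ 0) ∧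
      ∀ y, ∀ q ∈ S y, ContinuousAt (Function.uncurry w) (y, q) ∧ ‖w y q - T q‖ ≤ ε := by
  choose O φ hO hSO hφfin hφ using fun y =>
    exists_locallyConstant_approx (hfin y) hT (half_pos hε)
  obtain ⟨t, ρ, hρ⟩ := exists_smoothPartitionOfUnity_of_isInducing hι
    (fun y => upperHemicontinuous_iff_isOpen_preimage_Iic.1 hS _ (hO y)) hSO
  have : Finite (Set.univ.pi fun a : t => Set.range (φ a)) :=
    (Set.Finite.pi fun a => hφfin a)
  obtain ⟨e, he, hne⟩ := exists_norm_lt_forall_ne_of_finrank_lt hdim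
    (W := fun (v : Set.univ.pi fun a : t => Set.range (φ a)) x => ∑ a, ρ a x • v.1 a)
    (fun v => ContDiff.sum fun a _ =>
      ((ρ a).contMDiff.contDiff.of_le (by norm_cast)).smul contDiff_const) (half_pos hε)
  refine ⟨fun y q => ∑ a, ρ a (ι y) • φ a q - e, fun y q => ?_, fun y q hq => ⟨?_, ?_⟩⟩
  · exact sub_ne_zero.2 (hne ⟨fun a => φ a q, fun a _ => ⟨q, rfl⟩⟩ (ι y))
  · refine (continuousAt_sum_smul (fun a => (ρ a).contMDiff.continuous.comp hι.continuous)
      fun a ha => ?_).sub continuousAt_const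
    have hqO : q ∈ O a := hρ a y (tsupport_comp_subset_preimage _ hι.continuous ha) hq
    exact continuousAt_const.congr (Filter.EventuallyEq.symm (hφ a q hqO).1)
  · have hmem : ∑ a, ρ a (ι y) • φ a q ∈ Metric.closedBall (T q) (ε / 2) := by
      rw [← finsum_eq_sum_of_fintype]
      refine ρ.finsum_smul_mem_convex (g := fun a _ => φ a q) ⟨y, rfl⟩ (fun a ha => ?_)
        (convex_closedBall _ _)
      exact (hφ a q (hρ a y (subset_tsupport _ ha) hq)).2.le
    calc ‖∑ a, ρ a (ι y) • φ a q - e - T q‖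
        = ‖(∑ a, ρ a (ι y) • φ a q - T q) - e‖ := by rw [sub_right_comm]
      _ ≤ ‖∑ a, ρ a (ι y) • φ a q - T q‖ + ‖e‖ := norm_sub_le _ _
      _ ≤ ε / 2 + ε / 2 := add_le_add (mem_closedBall_iff_norm.1 hmem) he.le
      _ = ε := add_halves ε

end GeneralPosition

namespace CP

variable {n m l : ℕ}

/-- The point `[v]` of projective space with homogeneous coordinates `v`, with the junk value
`[1 : ⋯ : 1]` at `v = 0`. -/
noncomputable def mk (v : Fin (n + 1) → ℂ) : CP n :=
  open Classical in if hv : v ≠ 0 then Projectivization.mk ℂ v hv else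
    Projectivization.mk ℂ 1 one_ne_zero

/-- A choice of homogeneous coordinates. -/
noncomputable def rep (q : CP n) : Fin (n + 1) → ℂ := Projectivization.rep q

lemma mk_of_ne_zero {v : Fin (n + 1) → ℂ} (hv : v ≠ 0) : mk v = Projectivization.mk ℂ v hv :=
  dif_pos hv

lemma rep_ne_zero (q : CP n) : rep q ≠ 0 := Projectivization.rep_nonzero q

@[simp] lemma mk_rep (q : CP n) : mk (rep q) = q :=
  (mk_of_ne_zero (rep_ne_zero q)).trans (Projectivization.mk_rep q)

lemma mk_eq_mk_iff {v w : Fin (n + 1) → ℂ} (hv : v ≠ 0) (hw : w ≠ 0) :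
    mk v = mk w ↔ ∃ a : ℂˣ, a • w = v := by
  rw [mk_of_ne_zero hv, mk_of_ne_zero hw]
  exact Projectivization.mk_eq_mk_iff ℂ v w hv hw

lemma mk_smul (a : ℂˣ) (v : Fin (n + 1) → ℂ) : mk (a • v) = mk v := by
  by_cases hv : v = 0
  · simp [hv]
  · exact (mk_eq_mk_iff ((smul_ne_zero_iff_ne a).2 hv) hv).2 ⟨a, rfl⟩

lemma exists_smul_eq_rep_mk {v : Fin (n + 1) → ℂ} (hv : v ≠ 0) : ∃ a : ℂˣ, a • v = rep (mk v) :=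
  (mk_eq_mk_iff (rep_ne_zero _) hv).1 (mk_rep _)

lemma mk_eq_mk_iff_mul_eq_mul {v w : Fin (n + 1) → ℂ} (hv : v ≠ 0) (hw : w ≠ 0) :
    mk v = mk w ↔ ∀ i j, v i * w j = v j * w i := by
  rw [mk_eq_mk_iff hv hw]
  constructor
  · rintro ⟨a, rfl⟩ i j
    simp only [Pi.smul_apply, Units.smul_def, smul_eq_mul]
    ring
  · intro h
    obtain ⟨j, hj : w j ≠ 0⟩ := Function.ne_iff.1 hw
    have hsmul : (v j / w j) • w = v := by
      ext i
      rw [Pi.smul_apply, smul_eq_mul, div_mul_eq_mul_div, div_eq_iff hj, h]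
    have ha : v j / w j ≠ 0 := fun h0 => hv (by rw [← hsmul, h0, zero_smul])
    exact ⟨Units.mk0 _ ha, hsmul⟩

lemma isQuotientMap_mk :
    Topology.IsQuotientMap fun v : {v : Fin (n + 1) → ℂ // v ≠ 0} => mk v.1 := by
  have h : (fun v : {v : Fin (n + 1) → ℂ // v ≠ 0} => mk v.1) =
      Quotient.mk (projectivizationSetoid ℂ (Fin (n + 1) → ℂ)) :=
    funext fun v => mk_of_ne_zero v.2
  exact h ▸ isQuotientMap_quot_mk

lemma continuousAt_mk {v : Fin (n + 1) → ℂ} (hv : v ≠ 0) : ContinuousAt mk v :=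
  (isOpen_ne.isOpenEmbedding_subtypeVal.continuousAt_iff (x := ⟨v, hv⟩)).1
    isQuotientMap_mk.continuous.continuousAt

lemma isOpenMap_mk : IsOpenMap fun v : {v : Fin (n + 1) → ℂ // v ≠ 0} => mk v.1 := by
  intro U hU
  have h : (fun v : {v : Fin (n + 1) → ℂ // v ≠ 0} => mk v.1) ⁻¹' ((fun v => mk v.1) '' U) =
      ⋃ a : ℂˣ, (fun v => ⟨a • v.1, (smul_ne_zero_iff_ne a).2 v.2⟩) ⁻¹' U := by
    ext v
    simp only [Set.mem_preimage, Set.mem_image, Set.mem_iUnion]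
    constructor
    · rintro ⟨u, hu, h⟩
      obtain ⟨a, ha⟩ := (mk_eq_mk_iff u.2 v.2).1 h
      exact ⟨a, by convert hu⟩
    · rintro ⟨a, ha⟩
      exact ⟨_, ha, mk_smul a v.1⟩
  refine isQuotientMap_mk.isOpen_preimage.1 (h ▸ ?_)
  exact isOpen_iUnion fun a => hU.preimage (by fun_prop)

lemma isOpenQuotientMap_mk :
    IsOpenQuotientMap fun v : {v : Fin (n + 1) → ℂ // v ≠ 0} => mk v.1 :=
  ⟨fun q => ⟨⟨rep q, rep_ne_zero q⟩, mk_rep q⟩, isQuotientMap_mk.continuous, isOpenMap_mk⟩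

instance : T2Space (CP n) := by
  refine (t2Space_iff_of_isOpenQuotientMap isOpenQuotientMap_mk).2 ?_
  have h : {p : {v : Fin (n + 1) → ℂ // v ≠ 0} × {v : Fin (n + 1) → ℂ // v ≠ 0} |
      mk p.1.1 = mk p.2.1} = ⋂ i, ⋂ j, {p | p.1.1 i * p.2.1 j = p.1.1 j * p.2.1 i} := by
    ext p
    simp only [Set.mem_ofPred_eq, Set.mem_iInter, mk_eq_mk_iff_mul_eq_mul p.1.2 p.2.2]
  have hcoord (i : Fin (n + 1)) : Continuous fun v : {v : Fin (n + 1) → ℂ // v ≠ 0} => v.1 i :=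
    (continuous_apply i).comp continuous_subtype_val
  have hmul (i j : Fin (n + 1)) : Continuous fun p : {v : Fin (n + 1) → ℂ // v ≠ 0} ×
      {v : Fin (n + 1) → ℂ // v ≠ 0} => p.1.1 i * p.2.1 j :=
    ((hcoord i).comp continuous_fst).mul ((hcoord j).comp continuous_snd)
  exact h ▸ isClosed_iInter fun i => isClosed_iInter fun j => isClosed_eq (hmul i j) (hmul j i)

instance : PathConnectedSpace (CP n) := by
  have hrank : 1 < Module.rank ℝ (Fin (n + 1) → ℂ) := by
    rw [← Module.finrank_eq_rank, Module.finrank_pi_fintype]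
    simp only [Complex.finrank_real_complex, Finset.sum_const, Finset.card_univ,
      Fintype.card_fin, smul_eq_mul]
    norm_cast
    omega
  have : PathConnectedSpace {v : Fin (n + 1) → ℂ // v ≠ 0} :=
    isPathConnected_iff_pathConnectedSpace.1
      (isPathConnected_compl_singleton_of_one_lt_rank hrank 0)
  exact isOpenQuotientMap_mk.surjective.pathConnectedSpace isQuotientMap_mk.continuous

/-- The rational map `[v] ↦ [L v]` induced by a linear map `L`; it has a junk value where `L`
vanishes. -/
noncomputable def map (L : (Fin (n + 1) → ℂ) →L[ℂ] (Fin (m + 1) → ℂ)) (q : CP n) : CP m :=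
  mk (L (rep q))

lemma map_mk (L : (Fin (n + 1) → ℂ) →L[ℂ] (Fin (m + 1) → ℂ)) {v : Fin (n + 1) → ℂ}
    (hv : v ≠ 0) : map L (mk v) = mk (L v) := by
  obtain ⟨a, ha⟩ := exists_smul_eq_rep_mk hv
  rw [map, ← ha, Units.smul_def, map_smul, ← Units.smul_def, mk_smul]

@[simp] lemma map_id (q : CP n) : map (ContinuousLinearMap.id ℂ _) q = q := mk_rep q

lemma map_map (M : (Fin (m + 1) → ℂ) →L[ℂ] (Fin (l + 1) → ℂ))
    {L : (Fin (n + 1) → ℂ) →L[ℂ] (Fin (m + 1) → ℂ)} {q : CP n} (hL : L (rep q) ≠ 0) :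
    map M (map L q) = map (M.comp L) q :=
  map_mk M hL

lemma continuousAt_map {P : Type*} [TopologicalSpace P]
    {L : P → (Fin (n + 1) → ℂ) →L[ℂ] (Fin (m + 1) → ℂ)} {f : P → CP n} {p : P}
    (hL : ContinuousAt L p) (hf : ContinuousAt f p) (h : L p (rep (f p)) ≠ 0) :
    ContinuousAt (fun p => map (L p) (f p)) p := by
  have hquot : IsOpenQuotientMap (Prod.map id fun v => mk v.1 :
      ((Fin (n + 1) → ℂ) →L[ℂ] (Fin (m + 1) → ℂ)) × {v : Fin (n + 1) → ℂ // v ≠ 0} → _) :=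
    IsOpenQuotientMap.id.prodMap isOpenQuotientMap_mk
  have happly : Continuous fun x : ((Fin (n + 1) → ℂ) →L[ℂ] (Fin (m + 1) → ℂ)) ×
      {v : Fin (n + 1) → ℂ // v ≠ 0} => x.1 x.2.1 :=
    continuous_fst.clm_apply (continuous_subtype_val.comp continuous_snd)
  have hmk := (continuousAt_mk h).comp (x := (L p, ⟨rep (f p), rep_ne_zero _⟩))
    happly.continuousAt
  have hmap := (hquot.continuousAt_comp_iff (x := (L p, ⟨rep (f p), rep_ne_zero _⟩))
    (g := fun x => map x.1 x.2)).1 (hmk.congr (.of_forall fun x => (map_mk x.1 x.2.2).symm))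
  simp only [Prod.map, mk_rep, id] at hmap
  exact hmap.comp (f := fun p => (L p, f p)) (hL.prodMk hf)

lemma continuous_comp_rep {Z : Type*} [TopologicalSpace Z] {g : (Fin (n + 1) → ℂ) → Z}
    (hg : ∀ (a : ℂˣ) v, g (a • v) = g v) (hcont : ∀ v, v ≠ 0 → ContinuousAt g v) :
    Continuous fun q : CP n => g (rep q) := by
  refine isOpenQuotientMap_mk.continuous_comp_iff.1 (continuous_iff_continuousAt.2 fun v => ?_)
  refine ((hcont v v.2).comp continuousAt_subtype_val).congr (.of_forall fun w => ?_)
  obtain ⟨a, ha⟩ := exists_smul_eq_rep_mk w.2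
  simp only [Function.comp_apply, ← ha, hg]

end CP

section LinearDeformation

variable {𝕜 V W : Type*} [NontriviallyNormedField 𝕜] [NormedAddCommGroup V] [NormedSpace 𝕜 V]
  [NormedAddCommGroup W] [NormedSpace 𝕜 W] {i : W →L[𝕜] V} {s : V →L[𝕜] W}

/-- The straight-line deformation `(1 - t) • id + t • (i ∘ s)` of the identity to `i ∘ s`. -/
noncomputable def linearDeformation (i : W →L[𝕜] V) (s : V →L[𝕜] W) (t : 𝕜) : V →L[𝕜] V :=
  AffineMap.lineMap (ContinuousLinearMap.id 𝕜 V) (i.comp s) t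

lemma linearDeformation_zero : linearDeformation i s 0 = ContinuousLinearMap.id 𝕜 V :=
  AffineMap.lineMap_apply_zero _ _

lemma linearDeformation_one : linearDeformation i s 1 = i.comp s :=
  AffineMap.lineMap_apply_one _ _

lemma continuousAt_linearDeformation {P : Type*} [TopologicalSpace P] {s : P → V →L[𝕜] W}
    {t : P → 𝕜} {p : P} (hs : ContinuousAt s p) (ht : ContinuousAt t p) :
    ContinuousAt (fun p => linearDeformation i (s p) (t p)) p := by
  simp only [linearDeformation, AffineMap.lineMap_apply_module']
  fun_prop

lemma linearDeformation_comp (h : s.comp i = ContinuousLinearMap.id 𝕜 W) (t : 𝕜) :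
    (linearDeformation i s t).comp i = i := by
  ext w
  have hw : s (i w) = w := DFunLike.congr_fun h w
  simp [linearDeformation, AffineMap.lineMap_apply_module', hw]

lemma comp_linearDeformation (h : s.comp i = ContinuousLinearMap.id 𝕜 W) (t : 𝕜) :
    s.comp (linearDeformation i s t) = s := by
  ext v
  have hv : s (i (s v)) = s v := DFunLike.congr_fun h (s v)
  simp [linearDeformation, AffineMap.lineMap_apply_module', hv]

lemma linearDeformation_apply_ne_zero (h : s.comp i = ContinuousLinearMap.id 𝕜 W) {v : V}
    (hv : s v ≠ 0) (t : 𝕜) : linearDeformation i s t v ≠ 0 := fun h0 =>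
  hv <| by rw [← comp_linearDeformation h t, ContinuousLinearMap.comp_apply, h0, map_zero]

end LinearDeformation

section CyclesOnProjectiveSpace

open scoped unitInterval

variable {n m d : ℕ}

lemma continuousAt_map_cpMap {Y : Type*} [TopologicalSpace Y]
    {L : Y → CP n → (Fin (n + 1) → ℂ) →L[ℂ] (Fin (m + 1) → ℂ)} {f : Y → SP (CP n) d} {y : Y}
    (hL : ∀ q ∈ (f y).support, ContinuousAt (Function.uncurry L) (y, q)) (hf : ContinuousAt f y)
    (h : ∀ q ∈ (f y).support, L y q q.rep ≠ 0) :
    ContinuousAt (fun y => (f y).map fun q => q.map (L y q)) y :=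
  SP.continuousAt_map (φ := fun y (q : CP n) => q.map (L y q))
    (fun q hq => CP.continuousAt_map (f := Prod.snd) (hL q hq) continuousAt_snd (h q hq)) hf

/-- The map on zero-cycles induced by an injective linear map. -/
noncomputable def cycleMap (i : (Fin (n + 1) → ℂ) →L[ℂ] (Fin (m + 1) → ℂ))
    (hi : Function.Injective i) : C(SP (CP n) d, SP (CP m) d) where
  toFun := SP.map (CP.map i)
  continuous_toFun := continuous_iff_continuousAt.2 fun _ =>
    continuousAt_map_cpMap (L := fun _ _ => i) (f := id) (fun _ _ => continuousAt_const)
      continuousAt_id fun q _ => (map_ne_zero_iff i hi).2 q.rep_ne_zero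

variable {i : (Fin (n + 1) → ℂ) →L[ℂ] (Fin (m + 1) → ℂ)} (hi : Function.Injective i)

lemma map_cycleMap {l : ℕ} (L : CP m → (Fin (m + 1) → ℂ) →L[ℂ] (Fin (l + 1) → ℂ))
    (c : SP (CP n) d) :
    (cycleMap i hi c).map (fun q => q.map (L q)) =
      c.map fun q => q.map ((L (q.map i)).comp i) := by
  refine (SP.map_map _ _ _).trans (SP.map_congr fun q _ => ?_)
  exact CP.map_map _ ((map_ne_zero_iff i hi).2 q.rep_ne_zero)

theorem exists_compression {Y : Type*} [TopologicalSpace Y] (f : C(Y, SP (CP m) d))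
    {s : Y → CP m → (Fin (m + 1) → ℂ) →L[ℂ] (Fin (n + 1) → ℂ)}
    (hsi : ∀ y q, (s y q).comp i = ContinuousLinearMap.id ℂ _)
    (hs : ∀ y, ∀ q ∈ (f y).support, ContinuousAt (Function.uncurry s) (y, q))
    (hne : ∀ y, ∀ q ∈ (f y).support, s y q q.rep ≠ 0) :
    ∃ g : C(Y, SP (CP n) d), (∀ y c, f y = cycleMap i hi c → g y = c) ∧
      f.HomotopicRel ((cycleMap i hi).comp g) (f ⁻¹' Set.range (cycleMap i hi)) := by
  let g : C(Y, SP (CP n) d) :=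
    ⟨fun y => (f y).map fun q => q.map (s y q), continuous_iff_continuousAt.2 fun y =>
      continuousAt_map_cpMap (hs y) (f.continuousAt y) (hne y)⟩
  let L (p : I × Y) (q : CP m) := linearDeformation i (s p.2 q) ((p.1 : ℝ) : ℂ)
  have hL (p : I × Y) (q) (hq : q ∈ (f p.2).support) :
      ContinuousAt (Function.uncurry L) (p, q) := by
    have hs' : ContinuousAt (fun x : (I × Y) × CP m => s x.1.2 x.2) (p, q) :=
      ContinuousAt.comp (x := (p, q)) (f := fun x : (I × Y) × CP m => (x.1.2, x.2))
        (g := Function.uncurry s) (hs p.2 q hq) (by fun_prop)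
    exact continuousAt_linearDeformation hs' (by fun_prop)
  let H : C(I × Y, SP (CP m) d) :=
    ⟨fun p => (f p.2).map fun q => q.map (L p q), continuous_iff_continuousAt.2 fun p =>
      continuousAt_map_cpMap (hL p) (f := fun p : I × Y => f p.2) (by fun_prop)
        fun q hq => linearDeformation_apply_ne_zero (hsi _ _) (hne _ q hq) _⟩
  have hH (t : I) (y : Y) : H (t, y) = (f y).map fun q => q.map (L (t, y) q) := rfl
  refine ⟨g, fun y c hc => ?_, ⟨⟨⟨H, fun y => ?_, fun y => ?_⟩, ?_⟩⟩⟩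
  · simp only [g, ContinuousMap.coe_mk, hc, map_cycleMap, hsi, CP.map_id]
    exact SP.map_id c
  · change H (0, y) = f y
    simp only [hH, L, Set.Icc.coe_zero, Complex.ofReal_zero, linearDeformation_zero, CP.map_id]
    exact SP.map_id (f y)
  · refine Eq.trans (SP.map_congr fun q hq => ?_) (SP.map_map _ _ _).symm
    simp only [L, Set.Icc.coe_one, Complex.ofReal_one, linearDeformation_one]
    exact (CP.map_map i (hne y q hq)).symm
  · rintro t y ⟨c, hc⟩
    change H (t, y) = f y
    simp only [hH, ← hc, L, map_cycleMap, linearDeformation_comp (hsi _ _)]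
    rfl

/-- The inclusion of the hyperplane on which the last coordinate vanishes. -/
noncomputable def hyperplaneInclusion (n : ℕ) : (Fin (n + 1) → ℂ) →L[ℂ] (Fin (n + 2) → ℂ) :=
  ContinuousLinearMap.pi (Fin.snoc ContinuousLinearMap.proj 0)

@[simp] lemma hyperplaneInclusion_castSucc (v : Fin (n + 1) → ℂ) (k : Fin (n + 1)) :
    hyperplaneInclusion n v k.castSucc = v k := by
  simp [hyperplaneInclusion]

@[simp] lemma hyperplaneInclusion_last (v : Fin (n + 1) → ℂ) :
    hyperplaneInclusion n v (Fin.last _) = 0 := by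
  simp [hyperplaneInclusion]

/-- The linear projection onto the hyperplane in the direction of `(-u, 1)`. -/
noncomputable def obliqueProjection (u : Fin (n + 1) → ℂ) :
    (Fin (n + 2) → ℂ) →L[ℂ] (Fin (n + 1) → ℂ) :=
  ContinuousLinearMap.pi (fun k => ContinuousLinearMap.proj k.castSucc) +
    (ContinuousLinearMap.proj (Fin.last _)).smulRight u

lemma obliqueProjection_apply (u : Fin (n + 1) → ℂ) (v : Fin (n + 2) → ℂ) :
    obliqueProjection u v = Fin.init v + v (Fin.last _) • u := rfl

lemma obliqueProjection_comp_hyperplaneInclusion (u : Fin (n + 1) → ℂ) :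
    (obliqueProjection u).comp (hyperplaneInclusion n) = ContinuousLinearMap.id ℂ _ := by
  ext v k
  simp [obliqueProjection_apply, Fin.init]

lemma continuous_obliqueProjection :
    Continuous (obliqueProjection : (Fin (n + 1) → ℂ) → _ →L[ℂ] _) := by
  unfold obliqueProjection
  fun_prop

lemma hyperplaneInclusion_injective : Function.Injective (hyperplaneInclusion n) :=
  Function.LeftInverse.injective (g := obliqueProjection 0)
    (DFunLike.congr_fun (obliqueProjection_comp_hyperplaneInclusion 0))

/-- The affine coordinates `(v₀ / vₙ, …, vₙ₋₁ / vₙ)` of a point of projective space, scaled by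
`‖vₙ‖² / ‖v‖²` so as to extend continuously by `0` to the hyperplane `vₙ = 0`. -/
noncomputable def dampedAffineCoords (v : Fin (n + 2) → ℂ) : Fin (n + 1) → ℂ :=
  (star (v (Fin.last _)) / (‖v‖ : ℂ) ^ 2) • Fin.init v

lemma dampedAffineCoords_smul (a : ℂˣ) (v : Fin (n + 2) → ℂ) :
    dampedAffineCoords (a • v) = dampedAffineCoords v := by
  ext k
  have ha : (a : ℂ) * star (a : ℂ) = (‖(a : ℂ)‖ : ℂ) ^ 2 := Complex.mul_conj' _
  have ha' : star (a : ℂ) ≠ 0 := star_ne_zero.2 a.ne_zero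
  simp only [dampedAffineCoords, Units.smul_def, norm_smul, Pi.smul_apply, smul_eq_mul, star_mul',
    Complex.ofReal_mul, Fin.init, mul_pow, ← ha]
  field_simp

lemma continuous_dampedAffineCoords_rep :
    Continuous fun q : CP (n + 1) => dampedAffineCoords q.rep := by
  refine CP.continuous_comp_rep dampedAffineCoords_smul fun v hv => ?_
  have hv' : (‖v‖ : ℂ) ^ 2 ≠ 0 := by simpa using hv
  have hcoeff : ContinuousAt
      (fun v : Fin (n + 2) → ℂ => star (v (Fin.last _)) / (‖v‖ : ℂ) ^ 2) v :=
    (continuous_apply (Fin.last (n + 1))).star.continuousAt.div (by fun_prop) hv'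
  exact hcoeff.smul (continuousAt_pi.2 fun k => continuousAt_apply k.castSucc v)

lemma norm_eq_norm_last {v : Fin (n + 2) → ℂ} (h : ‖Fin.init v‖ ≤ ‖v (Fin.last _)‖) :
    ‖v‖ = ‖v (Fin.last _)‖ := by
  refine le_antisymm ((pi_norm_le_iff_of_nonneg (norm_nonneg _)).2 fun k => ?_)
    (norm_le_pi_norm v _)
  exact Fin.lastCases le_rfl (fun k => (norm_le_pi_norm (Fin.init v) k).trans h) k

lemma last_smul_dampedAffineCoords {v : Fin (n + 2) → ℂ} (hv : v ≠ 0)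
    (h : ‖Fin.init v‖ ≤ ‖v (Fin.last _)‖) :
    v (Fin.last _) • dampedAffineCoords v = Fin.init v := by
  have hsq : v (Fin.last _) * star (v (Fin.last _)) = (‖v‖ : ℂ) ^ 2 := by
    rw [norm_eq_norm_last h]
    exact Complex.mul_conj' _
  have hv' : (‖v‖ : ℂ) ^ 2 ≠ 0 := by simpa using hv
  rw [dampedAffineCoords, smul_smul, ← mul_div_assoc, hsq, div_self hv', one_smul]

lemma obliqueProjection_sub_dampedAffineCoords_ne_zero {v : Fin (n + 2) → ℂ} (hv : v ≠ 0)
    {w : Fin (n + 1) → ℂ} (hw : w ≠ 0) (h : ‖w - dampedAffineCoords v‖ ≤ 1) :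
    obliqueProjection (w - dampedAffineCoords v) v ≠ 0 := by
  intro h0
  rw [obliqueProjection_apply] at h0
  have hinit : ‖Fin.init v‖ ≤ ‖v (Fin.last _)‖ := by
    rw [eq_neg_of_add_eq_zero_left h0, norm_neg, norm_smul]
    exact mul_le_of_le_one_right (norm_nonneg _) h
  rw [smul_sub, last_smul_dampedAffineCoords hv hinit, add_sub_cancel, smul_eq_zero] at h0
  have hlast : v (Fin.last _) ≠ 0 := by
    rw [← norm_ne_zero_iff, ← norm_eq_norm_last hinit]
    exact norm_ne_zero_iff.2 hv
  exact h0.elim hlast hw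

end CyclesOnProjectiveSpace

section Stability

open scoped unitInterval
open Module

variable {n m d k : ℕ}

lemma finrank_real_fin_complex (n : ℕ) : finrank ℝ (Fin n → ℂ) = 2 * n := by
  simp [finrank_pi_fintype, mul_comm]

theorem compressesMaps_hyperplane {E Y : Type*} [NormedAddCommGroup E] [NormedSpace ℝ E]
    [FiniteDimensional ℝ E] [TopologicalSpace Y] [CompactSpace Y] {ι : Y → E}
    (hι : Topology.IsInducing ι) (hdim : finrank ℝ E < 2 * (n + 1)) :
    CompressesMaps (cycleMap (d := d) (hyperplaneInclusion n) hyperplaneInclusion_injective) Y := by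
  intro f
  obtain ⟨w, hw, hwS⟩ := exists_ne_zero_approx_of_finrank_lt hι
    (hdim.trans_eq (finrank_real_fin_complex _).symm)
    (SP.upperHemicontinuous_support.comp f.continuous) (fun y => (f y).finite_support)
    continuous_dampedAffineCoords_rep one_pos
  refine exists_compression _ f
    (s := fun y q => obliqueProjection (w y q - dampedAffineCoords q.rep))
    (fun y q => obliqueProjection_comp_hyperplaneInclusion _) (fun y q hq => ?_) fun y q hq => ?_
  · exact continuous_obliqueProjection.continuousAt.comp ((hwS y q hq).1.sub
      (continuous_dampedAffineCoords_rep.comp continuous_snd).continuousAt)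
  · exact obliqueProjection_sub_dampedAffineCoords_ne_zero q.rep_ne_zero (hw y q) (hwS y q hq).2

theorem homotopyGroupMap_hyperplane_bijective (hk : k ≤ 2 * n) (a : SP (CP n) d) :
    Function.Bijective (homotopyGroupMap (N := Fin k)
      (cycleMap (hyperplaneInclusion n) hyperplaneInclusion_injective) a) := by
  have hcube : Topology.IsInducing fun (y : Fin k → I) i => (y i : ℝ) :=
    .piMap fun _ => .subtypeVal
  refine ⟨CompressesMaps.homotopyGroupMap_injective (compressesMaps_hyperplane
    (Topology.IsInducing.subtypeVal.prodMap hcube) ?_) a,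
    CompressesMaps.homotopyGroupMap_surjective (compressesMaps_hyperplane hcube ?_) a⟩
  · rw [finrank_prod, finrank_self, finrank_fin_fun]
    omega
  · rw [finrank_fin_fun]
    omega

theorem exists_homotopyGroupMap_bijective_of_le (d : ℕ) (h : n ≤ m) :
    ∃ J : C(SP (CP n) d, SP (CP m) d), ∀ k ≤ 2 * n, ∀ a,
      Function.Bijective (homotopyGroupMap (N := Fin k) J a) := by
  induction m, h using Nat.le_induction with
  | base =>
    refine ⟨.id _, fun k _ a => ?_⟩
    rw [homotopyGroupMap_id]
    exact Function.bijective_id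
  | succ m hnm ih =>
    obtain ⟨J, hJ⟩ := ih
    refine ⟨(cycleMap (hyperplaneInclusion m) hyperplaneInclusion_injective).comp J,
      fun k hk a => ?_⟩
    rw [homotopyGroupMap_comp]
    exact (homotopyGroupMap_hyperplane_bijective (by omega) _).comp (hJ k hk a)

theorem homotopyGroup_sp_cp_stable_of_le (h : n ≤ m) (a : SP (CP n) d) (b : SP (CP m) d) :
    (∀ k ≤ 2 * n, Nonempty ((π_ k (SP (CP n) d) a) ≃ (π_ k (SP (CP m) d) b))) ∧
    (∀ k, k + 1 ≤ 2 * n →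
      Nonempty ((π_ (k + 1) (SP (CP n) d) a) ≃* (π_ (k + 1) (SP (CP m) d) b))) := by
  obtain ⟨J, hJ⟩ := exists_homotopyGroupMap_bijective_of_le d h
  have hpath : Joined (J a) b := PathConnectedSpace.joined _ _
  refine ⟨fun k hk => ?_, fun k hk => ?_⟩
  · exact (nonempty_homotopyGroup_equiv_of_joined hpath).map (Equiv.ofBijective _ (hJ k hk a)).trans
  · exact (nonempty_homotopyGroup_mulEquiv_of_joined hpath).map
      (homotopyGroupMulEquiv J a (hJ (k + 1) hk a)).trans

end Stability

/-- **Stability** (case `p = 0` of the paper's stability theorem): for `d ≥ 1` and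
`0 ≤ k ≤ 2·min(n, m)`, the homotopy groups `π_k(SP^d(ℂP^n))` and `π_k(SP^d(ℂP^m))` are
isomorphic; in particular, for fixed `d` and `k` they are independent of the ambient
dimension `n` once `2n ≥ k`. For `k ≥ 1` the isomorphism is one of groups, and for `k = 0`
(and indeed every `k` in range) there is a bijection of homotopy sets. -/
theorem homotopy_groups_sp_cp_stable (d n m : ℕ) (hd : 1 ≤ d)
    (a : SP (CP n) d) (b : SP (CP m) d) :
    (∀ k : ℕ, k ≤ 2 * min n m →
      Nonempty ((π_ k (SP (CP n) d) a) ≃ (π_ k (SP (CP m) d) b))) ∧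
    (∀ k : ℕ, k + 1 ≤ 2 * min n m →
      Nonempty ((π_ (k + 1) (SP (CP n) d) a) ≃* (π_ (k + 1) (SP (CP m) d) b))) := by
  obtain h | h := le_total n m
  · rw [min_eq_left h]
    exact homotopyGroup_sp_cp_stable_of_le h a b
  · rw [min_eq_right h]
    have hstable := homotopyGroup_sp_cp_stable_of_le h b a
    exact ⟨fun k hk => (hstable.1 k hk).map Equiv.symm,
      fun k hk => (hstable.2 k hk).map MulEquiv.symm⟩
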